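/- arXiv:1608.00107 — 2 statements merged into one kernel-verified Lean document; each statement's English description precedes it below -/
import Mathlib

section
/- Let g : ℝ → [0,∞) be a probability density on ℝ with cumulative distribution function G(x) = ∫_{−∞}^{x} g(t) dt, and consider the location–scale family with density f(x | μ, τ) = τ⁻¹ g((x − μ)/τ) and cdf F(x | μ, τ) = G((x − μ)/τ), for μ ∈ ℝ and τ > 0. Fix 0 < p̲ < p̄ < 1 and points q̲ < q̄ with G(q̲) = p̲ and G(q̄) = p̄, and assume g is positive and continuous on a neighbourhood of q̲ and on a neighbourhood of q̄. For integers 1 ≤ l < u ≤ m and x̲ ≤ x̄ define f⋆(x̲, x̄ | μ, τ, m, l, u) = [m!/((l−1)!(u−l−1)!(m−u)!)] · F(x̲|μ,τ)^{l−1} · (F(x̄|μ,τ) − F(x̲|μ,τ))^{u−l−1} · (1 − F(x̄|μ,τ))^{m−u} · f(x̲|μ,τ) · f(x̄|μ,τ). Let π : ℝ × (0,∞) → [0,∞) be a twice continuously differentiable probability density such that ∫₀^∞ ∫_ℝ f⋆(x̲, x̄ | μ, τ, m, l, u) π(μ, τ) dμ dτ < ∞ for all m and all 1 ≤ l < u ≤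 m. Let (l_m) and (u_m) be integer sequences with 1 ≤ l_m < u_m ≤ m, l_m/(m+1) → p̲ and u_m/(m+1) → p̄ as m → ∞. Then for all x̲ < x̄, setting τ* = (x̄ − x̲)/(q̄ − q̲) and μ* = x̲ − τ*·q̲, one has lim_{m→∞} ∫₀^∞ ∫_ℝ f⋆(x̲, x̄ | μ, τ, m, l_m, u_m) π(μ, τ) dμ dτ = π(μ*, τ*)/(q̄ − q̲). -/
open MeasureTheory Filter

/-- The location–scale density `f(x | μ, τ) = τ⁻¹ g((x − μ)/τ)`. -/
noncomputable def locScalePDF (g : ℝ → ℝ) (μ τ x : ℝ) : ℝ := τ⁻¹ * g ((x - μ) / τ)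

/-- The location–scale cdf `F(x | μ, τ) = G((x − μ)/τ)`. -/
noncomputable def locScaleCDF (G : ℝ → ℝ) (μ τ x : ℝ) : ℝ := G ((x - μ) / τ)

/-- The joint density `f⋆(x̲, x̄ | μ, τ, m, l, u)` of the `l`-th and `u`-th order
statistics of `m` i.i.d. samples from the location–scale family:
`[m!/((l−1)!(u−l−1)!(m−u)!)] F(x̲)^{l−1} (F(x̄)−F(x̲))^{u−l−1} (1−F(x̄))^{m−u} f(x̲) f(x̄)`. -/
noncomputable def orderStatLik (g G : ℝ → ℝ) (m l u : ℕ) (μ τ xl xu : ℝ) : ℝ :=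
  ((m.factorial : ℝ) /
      (((l - 1).factorial : ℝ) * ((u - l - 1).factorial : ℝ) * ((m - u).factorial : ℝ))) *
    locScaleCDF G μ τ xl ^ (l - 1) *
    (locScaleCDF G μ τ xu - locScaleCDF G μ τ xl) ^ (u - l - 1) *
    (1 - locScaleCDF G μ τ xu) ^ (m - u) *
    locScalePDF g μ τ xl * locScalePDF g μ τ xu

/-!
For `x̲ < x̄` the standardized values `p = ((x̲ - μ) / τ, (x̄ - μ) / τ)` are coordinates on the
half-plane `0 < τ`, ranging over `p.1 < p.2`. In them `f⋆ dμ dτ` becomes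
`(p.2 - p.1)⁻¹ K(G p.1, G p.2) g(p.1) g(p.2) dp`, where `K` is the joint density of two order
statistics of uniform variables. With respect to `g(p.1) g(p.2) dp` the function `K(G p.1, G p.2)`
has mass one, by the probability integral transform, and a Chernoff bound makes it exponentially
small in `m` away from `(q̲, q̄)`. Hence it is an approximate identity at `(q̲, q̄)`, the point
corresponding to `(μ*, τ*)`.
-/

open scoped Nat Topology
open ProbabilityTheory (cdf)

section Multinomial

variable {ι : Type*} [Fintype ι]

lemma multinomial_mul_prod_pow_le (k : ι → ℕ) {x : ι → ℝ} (hx : ∀ j, 0 ≤ x j) :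
    (Nat.multinomial Finset.univ k : ℝ) * ∏ j, x j ^ k j ≤ (∑ j, x j) ^ ∑ j, k j := by
  classical
  rw [Finset.sum_pow_eq_sum_piAntidiag]
  exact Finset.single_le_sum
    (f := fun k : ι → ℕ ↦ (Nat.multinomial Finset.univ k : ℝ) * ∏ j, x j ^ k j)
    (fun k _ ↦ mul_nonneg (Nat.cast_nonneg _) (Finset.prod_nonneg fun j _ ↦ pow_nonneg (hx j) _))
    (by simp)

lemma sum_mul_exp_le_exp_sq {x z : ι → ℝ} {c : ℝ} (hx : ∀ j, 0 ≤ x j) (hx_sum : ∑ j, x j = 1)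
    (hxz : ∑ j, x j * z j = 0) (hz : ∀ j, |z j| ≤ c) (hc : c ≤ 1) :
    ∑ j, x j * Real.exp (z j) ≤ Real.exp (c ^ 2) := by
  have exp_le (j : ι) : Real.exp (z j) ≤ 1 + z j + c ^ 2 := by
    have hquad := le_of_abs_le (Real.abs_exp_sub_one_sub_id_le ((hz j).trans hc))
    have hsq : z j ^ 2 ≤ c ^ 2 := sq_le_sq' (neg_le_of_abs_le (hz j)) (le_of_abs_le (hz j))
    linarith
  calc ∑ j, x j * Real.exp (z j)
      ≤ ∑ j, x j * (1 + z j + c ^ 2) :=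
        Finset.sum_le_sum fun j _ ↦ mul_le_mul_of_nonneg_left (exp_le j) (hx j)
    _ = c ^ 2 + 1 := by
        simp only [mul_add, mul_one, Finset.sum_add_distrib, ← Finset.sum_mul, hx_sum, hxz]
        ring
    _ ≤ Real.exp (c ^ 2) := Real.add_one_le_exp _

-- Tilt the weights by `exp (t (1_{j = i} - x i))` in the multinomial theorem.
lemma multinomial_mul_prod_pow_mul_exp_le {x : ι → ℝ} (hx : ∀ j, 0 ≤ x j)
    (hx_sum : ∑ j, x j = 1) (k : ι → ℕ) (i : ι) {t : ℝ} (ht : |t| ≤ 1) :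
    (Nat.multinomial Finset.univ k : ℝ) * (∏ j, x j ^ k j) *
      Real.exp (t * (k i - (∑ j, k j : ℕ) * x i)) ≤ Real.exp ((∑ j, k j : ℕ) * t ^ 2) := by
  classical
  let z (j : ι) : ℝ := t * ((if j = i then 1 else 0) - x i)
  have hxi : x i ≤ 1 := hx_sum ▸ Finset.single_le_sum (fun j _ ↦ hx j) (Finset.mem_univ i)
  have hxz : ∑ j, x j * z j = 0 := by
    simp only [z, mul_sub, mul_left_comm _ t, ← Finset.mul_sum, Finset.sum_sub_distrib]
    simp [← Finset.sum_mul, hx_sum]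
  have hz (j : ι) : |z j| ≤ |t| := by
    have hle : |(if j = i then (1 : ℝ) else 0) - x i| ≤ 1 := by
      rw [abs_le]
      split_ifs <;> constructor <;> linarith [hx i]
    simpa [z, abs_mul] using mul_le_mul_of_nonneg_left hle (abs_nonneg t)
  have hprod : ∏ j, (x j * Real.exp (z j)) ^ k j =
      (∏ j, x j ^ k j) * Real.exp (t * (k i - (∑ j, k j : ℕ) * x i)) := by
    simp only [mul_pow, Finset.prod_mul_distrib, ← Real.exp_nat_mul, ← Real.exp_sum]
    congr 2
    simp only [z, mul_left_comm _ t, ← Finset.mul_sum, mul_sub, Finset.sum_sub_distrib]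
    simp [← Finset.sum_mul]
  calc _ = (Nat.multinomial Finset.univ k : ℝ) * ∏ j, (x j * Real.exp (z j)) ^ k j := by
        rw [hprod, mul_assoc]
    _ ≤ (∑ j, x j * Real.exp (z j)) ^ ∑ j, k j :=
        multinomial_mul_prod_pow_le k fun j ↦ mul_nonneg (hx j) (Real.exp_nonneg _)
    _ ≤ Real.exp (|t| ^ 2) ^ ∑ j, k j :=
        pow_le_pow_left₀ (Finset.sum_nonneg fun j _ ↦ mul_nonneg (hx j) (Real.exp_nonneg _))
          (sum_mul_exp_le_exp_sq hx hx_sum hxz hz ht) _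
    _ = _ := by rw [sq_abs, Real.exp_nat_mul]

lemma multinomial_mul_prod_pow_le_exp_neg_sq {x : ι → ℝ} (hx : ∀ j, 0 ≤ x j)
    (hx_sum : ∑ j, x j = 1) (k : ι → ℕ) (i : ι) :
    (Nat.multinomial Finset.univ k : ℝ) * ∏ j, x j ^ k j ≤
      Real.exp (-((∑ j, k j : ℕ) * (x i - k i / (∑ j, k j : ℕ)) ^ 2 / 4)) := by
  set n := ∑ j, k j with hn
  set d : ℝ := k i / n - x i with hd
  have hki : k i ≤ n := Finset.single_le_sum (fun j _ ↦ zero_le) (Finset.mem_univ i)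
  have hxi : x i ≤ 1 := hx_sum ▸ Finset.single_le_sum (fun j _ ↦ hx j) (Finset.mem_univ i)
  have hdiv : (k i / n : ℝ) ≤ 1 := div_le_one_of_le₀ (by exact_mod_cast hki) n.cast_nonneg
  have hd_abs : |d / 2| ≤ 1 := by
    have : (0 : ℝ) ≤ k i / n := by positivity
    rw [abs_le]
    constructor <;> linarith [hx i]
  have hnd : (k i - n * x i : ℝ) = n * d := by
    rcases eq_or_ne n 0 with h0 | h0
    · simp [h0, Nat.le_zero.mp (h0 ▸ hki)]
    · rw [hd]
      field_simp
  -- The exponent `n * (t ^ 2 - t * d)` is smallest at `t = d / 2`.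
  have hchernoff := multinomial_mul_prod_pow_mul_exp_le hx hx_sum k i hd_abs
  rw [← hn, hnd, ← le_div_iff₀ (Real.exp_pos _), ← Real.exp_sub] at hchernoff
  refine hchernoff.trans_eq ?_
  congr 1
  rw [hd]
  ring

end Multinomial

/-- The density at `(s, t)`, `0 ≤ s ≤ t ≤ 1`, of the order statistics of ranks `i + 1` and
`i + j + 2` among `i + j + k + 2` independent uniform variables on `[0, 1]`; the spacings
`s`, `t - s`, `1 - t` then follow a Dirichlet law. -/
noncomputable def dirichletKernel (i j k : ℕ) (p : ℝ × ℝ) : ℝ :=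
  ((i + j + k + 2)! : ℝ) / (i ! * j ! * k !) * (p.1 ^ i * (p.2 - p.1) ^ j * (1 - p.2) ^ k)

@[fun_prop]
lemma continuous_dirichletKernel (i j k : ℕ) : Continuous (dirichletKernel i j k) := by
  unfold dirichletKernel
  fun_prop

section Kernel

variable {i j k : ℕ} {p : ℝ × ℝ}

lemma dirichletKernel_nonneg (h0 : 0 ≤ p.1) (h : p.1 ≤ p.2) (h1 : p.2 ≤ 1) :
    0 ≤ dirichletKernel i j k p := by
  have := sub_nonneg.2 h
  have := sub_nonneg.2 h1
  unfold dirichletKernel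
  positivity

lemma dirichletKernel_eq_multinomial (i j k : ℕ) (p : ℝ × ℝ) :
    dirichletKernel i j k p = ((i + j + k : ℕ) + 1) * ((i + j + k : ℕ) + 2) *
      ((Nat.multinomial Finset.univ ![i, j, k] : ℝ) *
        ∏ a, ![p.1, p.2 - p.1, 1 - p.2] a ^ ![i, j, k] a) := by
  have hspec := Nat.multinomial_spec Finset.univ ![i, j, k]
  simp only [Fin.prod_univ_three, Fin.sum_univ_three, Matrix.cons_val] at hspec ⊢
  have hfact : ((i + j + k + 2)! : ℝ) = ((i + j + k : ℕ) + 1) * ((i + j + k : ℕ) + 2) *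
      (i ! * j ! * k ! * Nat.multinomial Finset.univ ![i, j, k]) := by
    rw [Nat.factorial_succ, Nat.factorial_succ, ← hspec]
    push_cast
    ring
  rw [dirichletKernel, hfact]
  field_simp

lemma dirichletKernel_le (h0 : 0 ≤ p.1) (h : p.1 ≤ p.2) (h1 : p.2 ≤ 1) :
    dirichletKernel i j k p ≤ ((i + j + k : ℕ) + 1) * ((i + j + k : ℕ) + 2) *
      Real.exp (-((i + j + k : ℕ) *
        dist p (i / (i + j + k : ℕ), 1 - k / (i + j + k : ℕ)) ^ 2 / 4)) := by
  have hx (a : Fin 3) : 0 ≤ ![p.1, p.2 - p.1, 1 - p.2] a := by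
    fin_cases a <;> simp [h0, h, h1]
  have hx_sum : ∑ a, ![p.1, p.2 - p.1, 1 - p.2] a = 1 := by
    simp [Fin.sum_univ_three]
  have hbound := multinomial_mul_prod_pow_le_exp_neg_sq hx hx_sum ![i, j, k]
  have hsum : ∑ a, ![i, j, k] a = i + j + k := by simp [Fin.sum_univ_three]
  rw [dirichletKernel_eq_multinomial]
  gcongr
  rw [hsum] at hbound
  rw [Prod.dist_eq]
  rcases max_choice (dist p.1 (i / (i + j + k : ℕ))) (dist p.2 (1 - k / (i + j + k : ℕ)))
    with hmax | hmax <;> rw [hmax, Real.dist_eq, sq_abs]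
  · exact hbound 0
  · have hsq : (p.2 - (1 - k / (i + j + k : ℕ))) ^ 2 = (1 - p.2 - k / (i + j + k : ℕ) : ℝ) ^ 2 := by
      ring
    rw [hsq]
    exact hbound 2

end Kernel

lemma tendsto_quadratic_mul_exp_neg {c : ℝ} (hc : 0 < c) :
    Tendsto (fun n : ℕ ↦ ((n : ℝ) + 1) * (n + 2) * Real.exp (-(n * c))) atTop (𝓝 0) := by
  have hpow (d : ℕ) : Tendsto (fun n : ℕ ↦ (n : ℝ) ^ d * Real.exp (-c) ^ n) atTop (𝓝 0) :=
    tendsto_pow_const_mul_const_pow_of_lt_one d (Real.exp_nonneg _) (by simpa using hc)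
  have hsum := ((hpow 2).add ((hpow 1).const_mul 3)).add ((hpow 0).const_mul 2)
  simp only [mul_zero, add_zero] at hsum
  refine hsum.congr fun n ↦ ?_
  rw [← Real.exp_nat_mul, mul_neg]
  ring

lemma tendstoUniformlyOn_dirichletKernel {ι : Type*} {F : Filter ι} {i j k : ι → ℕ} {c : ℝ × ℝ}
    (hn : Tendsto (fun x ↦ i x + j x + k x) F atTop)
    (hc : Tendsto (fun x ↦ ((i x : ℝ) / (i x + j x + k x : ℕ),
      1 - (k x : ℝ) / (i x + j x + k x : ℕ))) F (𝓝 c))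
    {W : Set (ℝ × ℝ)} (hW : W ∈ 𝓝 c) :
    TendstoUniformlyOn (fun x ↦ dirichletKernel (i x) (j x) (k x)) 0 F
      ({p | 0 ≤ p.1 ∧ p.1 ≤ p.2 ∧ p.2 ≤ 1} \ W) := by
  obtain ⟨δ, hδ, hball⟩ := Metric.mem_nhds_iff.1 hW
  rw [Metric.tendstoUniformlyOn_iff]
  intro ε hε
  have hdecay := (tendsto_quadratic_mul_exp_neg (c := (δ / 2) ^ 2 / 4) (by positivity)).comp hn
  filter_upwards [Metric.tendsto_nhds.1 hc (δ / 2) (by positivity), hdecay.eventually_lt_const hε]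
    with x hcenter hsmall p ⟨⟨h0, h, h1⟩, hpW⟩
  have hp : δ ≤ dist p c := not_lt.1 fun hlt ↦ hpW (hball hlt)
  have hfar := dist_triangle p ((i x : ℝ) / (i x + j x + k x : ℕ),
    1 - (k x : ℝ) / (i x + j x + k x : ℕ)) c
  rw [Pi.zero_apply, dist_zero_left, Real.norm_of_nonneg (dirichletKernel_nonneg h0 h h1)]
  refine (dirichletKernel_le h0 h h1).trans_lt (lt_of_le_of_lt ?_ hsmall)
  rw [Function.comp_apply, ← mul_div_assoc]
  gcongr
  linarith

lemma integral_pow_mul_sub_pow (i j : ℕ) {t : ℝ} (ht : 0 ≤ t) :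
    ∫ s in (0 : ℝ)..t, s ^ i * (t - s) ^ j = t ^ (i + j + 1) * (i ! * j ! / (i + j + 1)!) := by
  rcases ht.eq_or_lt with rfl | ht
  · simp
  have hscaled := Complex.betaIntegral_scaled (i + 1) (j + 1) ht
  have hre (n : ℕ) : 0 < ((n : ℂ) + 1).re := by
    simp only [Complex.add_re, Complex.natCast_re, Complex.one_re]
    positivity
  rw [Complex.betaIntegral_eq_Gamma_mul_div _ _ (hre i) (hre j),
    show (i + 1 + (j + 1) : ℂ) = (i + j + 1 : ℕ) + 1 by push_cast; ring] at hscaled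
  simp only [add_sub_cancel_right, Complex.cpow_natCast, Complex.Gamma_nat_eq_factorial]
    at hscaled
  apply Complex.ofReal_injective
  rw [← intervalIntegral.integral_ofReal]
  push_cast
  exact hscaled

lemma setIntegral_indicator_lt_dirichletKernel {t : ℝ} (ht : t ∈ Set.Icc 0 1) (i j k : ℕ) :
    ∫ s in Set.Icc 0 1, {p : ℝ × ℝ | p.1 < p.2}.indicator (dirichletKernel i j k) (s, t) =
      ((i + j + k + 2)! : ℝ) / ((i + j + 1)! * k !) * (t ^ (i + j + 1) * (1 - t) ^ k) := by
  have hslice : (fun s ↦ {p : ℝ × ℝ | p.1 < p.2}.indicator (dirichletKernel i j k) (s, t)) =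
      (Set.Iio t).indicator fun s ↦ dirichletKernel i j k (s, t) := rfl
  have hinter : Set.Icc 0 1 ∩ Set.Iio t = Set.Ico 0 t := by grind
  have hkernel (s : ℝ) : dirichletKernel i j k (s, t) =
      ((i + j + k + 2)! : ℝ) / (i ! * j ! * k !) * (1 - t) ^ k * (s ^ i * (t - s) ^ j) := by
    rw [dirichletKernel]
    ring
  simp_rw [hslice, setIntegral_indicator measurableSet_Iio, hinter, hkernel]
  rw [integral_Ico_eq_integral_Ioc, ← intervalIntegral.integral_of_le ht.1,
    intervalIntegral.integral_const_mul, integral_pow_mul_sub_pow i j ht.1]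
  field_simp

lemma setIntegral_dirichletKernel (i j k : ℕ) :
    ∫ p in {p : ℝ × ℝ | p.1 < p.2}, dirichletKernel i j k p
      ∂(volume.restrict (Set.Icc 0 1)).prod (volume.restrict (Set.Icc 0 1)) = 1 := by
  have hint : Integrable ({p : ℝ × ℝ | p.1 < p.2}.indicator (dirichletKernel i j k))
      ((volume.restrict (Set.Icc 0 1)).prod (volume.restrict (Set.Icc 0 1))) := by
    rw [Measure.prod_restrict]
    exact ((continuous_dirichletKernel i j k).continuousOn.integrableOn_compact
      (isCompact_Icc.prod isCompact_Icc)).indicator measurableSet_lt'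
  rw [← integral_indicator measurableSet_lt', integral_prod_symm _ hint,
    setIntegral_congr_fun measurableSet_Icc fun t ht ↦
      setIntegral_indicator_lt_dirichletKernel ht i j k,
    integral_Icc_eq_integral_Ioc, ← intervalIntegral.integral_of_le zero_le_one,
    intervalIntegral.integral_const_mul, integral_pow_mul_sub_pow _ _ zero_le_one,
    show i + j + 1 + k + 1 = i + j + k + 2 by ring]
  field_simp
  simp

lemma comap_nhds_le_of_monotone {α β : Type*} [LinearOrder α] [TopologicalSpace α]
    [OrderTopology α] [NoMinOrder α] [NoMaxOrder α] [LinearOrder β] [TopologicalSpace β]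
    [OrderClosedTopology β] {G : α → β} (hG : Monotone G) {q : α}
    (hq : ∀ x, G x = G q → x = q) : comap G (𝓝 (G q)) ≤ 𝓝 q := by
  refine (nhds_basis_Ioo q).ge_iff.2 fun ⟨a, b⟩ ⟨ha, hb⟩ ↦ ?_
  have hGa : G a < G q := (hG ha.le).lt_of_ne fun h ↦ ha.ne (hq a h)
  have hGb : G q < G b := (hG hb.le).lt_of_ne fun h ↦ hb.ne' (hq b h.symm)
  exact ⟨Set.Ioo (G a) (G b), Ioo_mem_nhds hGa hGb,
    fun x hx ↦ ⟨hG.reflect_lt hx.1, hG.reflect_lt hx.2⟩⟩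

lemma comap_prodMap_cdf_nhds_le (P : Measure ℝ) {ql qu : ℝ}
    (hql : ∀ x, cdf P x = cdf P ql → x = ql)
    (hqu : ∀ x, cdf P x = cdf P qu → x = qu) :
    comap (Prod.map (cdf P) (cdf P)) (𝓝 (cdf P ql, cdf P qu)) ≤ 𝓝 (ql, qu) := by
  have hmono := ProbabilityTheory.monotone_cdf P
  rw [nhds_prod_eq, nhds_prod_eq]
  exact (prod_comap_comap_eq ..).ge.trans
    (prod_mono (comap_nhds_le_of_monotone hmono hql) (comap_nhds_le_of_monotone hmono hqu))

section ProbabilityIntegralTransform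

variable (P : Measure ℝ) [IsProbabilityMeasure P] [NullSingletonClass P]

lemma continuous_cdf : Continuous (cdf P) := by
  refine continuous_iff_continuousAt.2 fun x ↦
    continuousAt_iff_continuous_left'_right'.2 ⟨?_, ((cdf P).right_continuous x).mono
      Set.Ioi_subset_Ici_self⟩
  rw [(ProbabilityTheory.monotone_cdf P).continuousWithinAt_Iio_iff_leftLim_eq]
  have hatom : ENNReal.ofReal (cdf P x - Function.leftLim (cdf P) x) = 0 := by
    rw [← StieltjesFunction.measure_singleton, ProbabilityTheory.measure_cdf, measure_singleton]
  exact ((ProbabilityTheory.monotone_cdf P).leftLim_le le_rfl).antisymm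
    (sub_nonpos.1 (ENNReal.ofReal_eq_zero.1 hatom))

lemma measure_cdf_le_eq_ofReal {s : ℝ} (hs : s < 1) : P {x | cdf P x ≤ s} = ENNReal.ofReal s := by
  have hmono := ProbabilityTheory.monotone_cdf P
  rcases Set.eq_empty_or_nonempty {x | cdf P x ≤ s} with hempty | hne
  · have hs0 : s ≤ 0 := by
      by_contra! hpos
      obtain ⟨x, hx⟩ := ((ProbabilityTheory.tendsto_cdf_atBot P).eventually_le_const hpos).exists
      exact hempty.subset hx
    rw [hempty, measure_empty, ENNReal.ofReal_of_nonpos hs0]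
  obtain ⟨b, hb⟩ := ((ProbabilityTheory.tendsto_cdf_atTop P).eventually_const_lt hs).exists
  have hbdd : BddAbove {x | cdf P x ≤ s} :=
    ⟨b, fun x hx ↦ (hmono.reflect_lt (lt_of_le_of_lt hx hb)).le⟩
  have hclosed : IsClosed {x | cdf P x ≤ s} := isClosed_le (continuous_cdf P) continuous_const
  set m := sSup {x | cdf P x ≤ s}
  have hm : cdf P m ≤ s := hclosed.csSup_mem hne hbdd
  have hset : {x | cdf P x ≤ s} = Set.Iic m :=
    Set.Subset.antisymm (fun x hx ↦ le_csSup hbdd hx) fun x hx ↦ (hmono hx).trans hm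
  have hms : s ≤ cdf P m := by
    refine ge_of_tendsto ((continuous_cdf P).continuousWithinAt (s := Set.Ioi m)) ?_
    filter_upwards [self_mem_nhdsWithin] with x hx
    exact (not_le.1 fun h ↦ (not_le.2 hx) (le_csSup hbdd h)).le
  rw [hset, ← ProbabilityTheory.ofReal_cdf, hm.antisymm hms]

lemma map_cdf_eq_volume_restrict :
    P.map (cdf P) = volume.restrict (Set.Icc 0 1) := by
  have hmeas : Measurable (cdf P) := (continuous_cdf P).measurable
  refine Measure.ext_of_Iic _ _ fun s ↦ ?_
  have hinter : Set.Iic s ∩ Set.Icc 0 1 = Set.Icc 0 (min 1 s) := by grind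
  rw [Measure.map_apply hmeas measurableSet_Iic, Measure.restrict_apply measurableSet_Iic,
    hinter, Real.volume_Icc, sub_zero]
  rcases lt_or_ge s 1 with hs | hs
  · rw [min_eq_right hs.le]
    exact measure_cdf_le_eq_ofReal P hs
  · have huniv : cdf P ⁻¹' Set.Iic s = Set.univ :=
      Set.eq_univ_of_forall fun x ↦ (ProbabilityTheory.cdf_le_one P x).trans hs
    rw [huniv, measure_univ, min_eq_left hs, ENNReal.ofReal_one]

lemma map_prodMap_cdf :
    (P.prod P).map (Prod.map (cdf P) (cdf P)) =
      (volume.restrict (Set.Icc 0 1)).prod (volume.restrict (Set.Icc 0 1)) := by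
  have hmeas : Measurable (cdf P) := (continuous_cdf P).measurable
  rw [← Measure.map_prod_map _ _ hmeas hmeas, map_cdf_eq_volume_restrict]

lemma setOf_lt_ae_eq_preimage_prodMap_cdf :
    {p : ℝ × ℝ | p.1 < p.2} =ᵐ[P.prod P]
      Prod.map (cdf P) (cdf P) ⁻¹' {p | p.1 < p.2} := by
  have hmeas : Measurable (cdf P) := (continuous_cdf P).measurable
  have hfiber (x : ℝ) : P {y | cdf P y = cdf P x} = 0 := by
    change P (cdf P ⁻¹' {cdf P x}) = 0
    rw [← Measure.map_apply hmeas (measurableSet_singleton _), map_cdf_eq_volume_restrict,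
      measure_singleton]
  have hne : ∀ᵐ p ∂P.prod P, cdf P p.2 ≠ cdf P p.1 :=
    Measure.ae_prod_iff_ae_ae (measurableSet_eq_fun (by fun_prop) (by fun_prop)).compl |>.2
      (ae_of_all _ fun x ↦ by simpa [ae_iff] using hfiber x)
  filter_upwards [hne] with p hp
  exact propext ⟨fun h ↦ (ProbabilityTheory.monotone_cdf P h.le).lt_of_ne hp.symm,
    fun h ↦ (ProbabilityTheory.monotone_cdf P).reflect_lt h⟩

lemma setIntegral_dirichletKernel_cdf (i j k : ℕ) :
    ∫ p in {p : ℝ × ℝ | p.1 < p.2}, dirichletKernel i j k (Prod.map (cdf P) (cdf P) p)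
      ∂P.prod P = 1 := by
  have hmeas : Measurable (Prod.map (cdf P) (cdf P)) :=
    (continuous_cdf P).measurable.prodMap (continuous_cdf P).measurable
  rw [setIntegral_congr_set (setOf_lt_ae_eq_preimage_prodMap_cdf P),
    ← setIntegral_map measurableSet_lt' (by fun_prop) hmeas.aemeasurable,
    map_prodMap_cdf, setIntegral_dirichletKernel]

variable {ι : Type*} {F : Filter ι} {i j k : ι → ℕ} {ql qu : ℝ}
  {E : Type*} [NormedAddCommGroup E] [NormedSpace ℝ E] [CompleteSpace E]

theorem tendsto_setIntegral_dirichletKernel_cdf_smul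
    (hql : ∀ x, cdf P x = cdf P ql → x = ql) (hqu : ∀ x, cdf P x = cdf P qu → x = qu)
    (hn : Tendsto (fun x ↦ i x + j x + k x) F atTop)
    (hc : Tendsto (fun x ↦ ((i x : ℝ) / (i x + j x + k x : ℕ),
      1 - (k x : ℝ) / (i x + j x + k x : ℕ))) F (𝓝 (cdf P ql, cdf P qu)))
    {f : ℝ × ℝ → E} {a : E} (hf_int : IntegrableOn f {p | p.1 < p.2} (P.prod P))
    (hf_lim : Tendsto f (𝓝[{p | p.1 < p.2}] (ql, qu)) (𝓝 a)) :
    Tendsto (fun x ↦ ∫ p in {p : ℝ × ℝ | p.1 < p.2},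
      dirichletKernel (i x) (j x) (k x) (Prod.map (cdf P) (cdf P) p) • f p ∂P.prod P) F (𝓝 a) := by
  have hbounds {p : ℝ × ℝ} (hp : p.1 < p.2) :
      0 ≤ cdf P p.1 ∧ cdf P p.1 ≤ cdf P p.2 ∧ cdf P p.2 ≤ 1 :=
    ⟨ProbabilityTheory.cdf_nonneg P _, ProbabilityTheory.monotone_cdf P hp.le,
      ProbabilityTheory.cdf_le_one P _⟩
  have hmeas : Measurable (Prod.map (cdf P) (cdf P)) :=
    (continuous_cdf P).measurable.prodMap (continuous_cdf P).measurable
  refine tendsto_setIntegral_peak_smul_of_integrableOn_of_tendsto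
    measurableSet_lt' measurableSet_lt' subset_rfl self_mem_nhdsWithin
    (measure_ne_top _ _) ?nonneg ?decay ?mass ?measurable hf_int hf_lim
  case nonneg =>
    exact Eventually.of_forall fun x p hp ↦
      dirichletKernel_nonneg (hbounds hp).1 (hbounds hp).2.1 (hbounds hp).2.2
  case decay =>
    intro V hV hVq
    obtain ⟨W, hW, hWV⟩ := comap_prodMap_cdf_nhds_le P hql hqu (hV.mem_nhds hVq)
    exact ((tendstoUniformlyOn_dirichletKernel hn hc hW).comp (Prod.map (cdf P) (cdf P))).mono
      fun p hp ↦ ⟨hbounds hp.1, fun hpW ↦ hp.2 (hWV hpW)⟩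
  case mass =>
    simpa only [setIntegral_dirichletKernel_cdf] using tendsto_const_nhds
  case measurable =>
    exact Eventually.of_forall fun x ↦
      ((continuous_dirichletKernel _ _ _).measurable.comp hmeas).aestronglyMeasurable

end ProbabilityIntegralTransform

section Density

variable {g : ℝ → ℝ}

lemma isProbabilityMeasure_withDensity_ofReal (hg_nonneg : ∀ x, 0 ≤ g x)
    (hg_prob : ∫ x, g x = 1) :
    IsProbabilityMeasure (volume.withDensity fun x ↦ ENNReal.ofReal (g x)) := by
  constructor
  rw [withDensity_apply _ MeasurableSet.univ, setLIntegral_univ,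
    ← ofReal_integral_eq_lintegral_ofReal (integrable_of_integral_eq_one hg_prob)
      (ae_of_all _ hg_nonneg), hg_prob, ENNReal.ofReal_one]

lemma cdf_withDensity_ofReal
    [IsProbabilityMeasure (volume.withDensity fun x ↦ ENNReal.ofReal (g x))]
    (hg_nonneg : ∀ x, 0 ≤ g x) (hg_int : Integrable g) (x : ℝ) :
    cdf (volume.withDensity fun x ↦ ENNReal.ofReal (g x)) x = ∫ t in Set.Iic x, g t := by
  rw [ProbabilityTheory.cdf_eq_real, measureReal_def, withDensity_apply _ measurableSet_Iic,
    integral_eq_lintegral_of_nonneg_ae (ae_of_all _ hg_nonneg) hg_int.aestronglyMeasurable.restrict]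

lemma setIntegral_Iic_lt_setIntegral_Iic (hg_nonneg : ∀ x, 0 ≤ g x) (hg_int : Integrable g)
    {a b q : ℝ} (hab : a < b) (hq : q ∈ Set.Icc a b) (hg_pos : ∀ᶠ x in 𝓝 q, 0 < g x) :
    ∫ t in Set.Iic a, g t < ∫ t in Set.Iic b, g t := by
  rw [← sub_pos, intervalIntegral.integral_Iic_sub_Iic hg_int.integrableOn hg_int.integrableOn,
    intervalIntegral.integral_pos_iff_support_of_nonneg_ae (ae_of_all _ hg_nonneg)
      hg_int.intervalIntegrable]
  obtain ⟨V, hV, hVo, hqV⟩ := eventually_nhds_iff.1 hg_pos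
  refine ⟨hab, lt_of_lt_of_le ((hVo.inter isOpen_Ioo).measure_pos volume ?_)
    (measure_mono fun x hx ↦ ⟨(hV x hx.1).ne', Set.Ioo_subset_Ioc_self hx.2⟩)⟩
  exact mem_closure_iff.1 (closure_Ioo hab.ne ▸ hq) V hVo hqV

lemma eq_of_cdf_eq_of_eventually_pos (hg_nonneg : ∀ x, 0 ≤ g x) (hg_int : Integrable g)
    {G : ℝ → ℝ} (hG : ∀ x, G x = ∫ t in Set.Iic x, g t) {q : ℝ} (hg_pos : ∀ᶠ y in 𝓝 q, 0 < g y)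
    (x : ℝ) (hxq : G x = G q) : x = q := by
  rw [hG, hG] at hxq
  rcases lt_trichotomy x q with hlt | heq | hgt
  · exact absurd hxq (setIntegral_Iic_lt_setIntegral_Iic hg_nonneg hg_int hlt
      (Set.right_mem_Icc.2 hlt.le) hg_pos).ne
  · exact heq
  · exact absurd hxq (setIntegral_Iic_lt_setIntegral_Iic hg_nonneg hg_int hgt
      (Set.left_mem_Icc.2 hgt.le) hg_pos).ne'

end Density

section ChangeOfVariables

variable {xl xu : ℝ}

/-- The bijection between pairs `p.1 < p.2` of standardized values and location–scale parameters
`(μ, τ)`, `0 < τ`, given by `μ + τ * p.1 = xl` and `μ + τ * p.2 = xu`. -/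
noncomputable def zScoreEquiv (hx : xl < xu) : PartialEquiv (ℝ × ℝ) (ℝ × ℝ) where
  toFun p := (xl - (xu - xl) / (p.2 - p.1) * p.1, (xu - xl) / (p.2 - p.1))
  invFun q := ((xl - q.1) / q.2, (xu - q.1) / q.2)
  source := {p | p.1 < p.2}
  target := {q | 0 < q.2}
  map_source' _ hp := div_pos (sub_pos.2 hx) (sub_pos.2 hp)
  map_target' _ hq := div_lt_div_of_pos_right (sub_lt_sub_right hx _) hq
  left_inv' p hp := by
    have hp' : p.2 - p.1 ≠ 0 := (sub_pos.2 hp).ne'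
    have hx' : xu - xl ≠ 0 := (sub_pos.2 hx).ne'
    ext <;> dsimp only <;> field_simp <;> ring
  right_inv' q hq := by
    have hq' : q.2 ≠ 0 := ne_of_gt hq
    have hx' : xu - xl ≠ 0 := (sub_pos.2 hx).ne'
    have hdiff : (xu - q.1) / q.2 - (xl - q.1) / q.2 = (xu - xl) / q.2 := by ring
    ext <;> dsimp only <;> rw [hdiff] <;> field_simp
    ring

lemma image_zScoreEquiv (hx : xl < xu) :
    zScoreEquiv hx '' {p | p.1 < p.2} = {q | 0 < q.2} :=
  (zScoreEquiv hx).image_source_eq_target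

/-- The Fréchet derivative of `zScoreEquiv`, given by its Jacobian matrix. -/
noncomputable def zScoreEquivFDeriv (xl xu : ℝ) (p : ℝ × ℝ) : ℝ × ℝ →L[ℝ] ℝ × ℝ :=
  (Matrix.toLin (.finTwoProd ℝ) (.finTwoProd ℝ)
    !![-((xu - xl) * p.2 / (p.2 - p.1) ^ 2), (xu - xl) * p.1 / (p.2 - p.1) ^ 2;
      (xu - xl) / (p.2 - p.1) ^ 2, -((xu - xl) / (p.2 - p.1) ^ 2)]).toContinuousLinearMap

variable {p : ℝ × ℝ}

lemma hasFDerivAt_zScoreEquiv (hx : xl < xu) (hp : p.1 < p.2) :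
    HasFDerivAt (zScoreEquiv hx) (zScoreEquivFDeriv xl xu p) p := by
  have hne : p.2 - p.1 ≠ 0 := (sub_pos.2 hp).ne'
  have hscale := ((hasDerivAt_inv hne).comp_hasFDerivAt p
    ((hasFDerivAt_snd (𝕜 := ℝ)).sub hasFDerivAt_fst)).const_mul (xu - xl)
  have hloc := (hscale.mul hasFDerivAt_fst).const_sub xl
  rw [zScoreEquivFDeriv, Matrix.toLin_finTwoProd_toContinuousLinearMap]
  refine (hloc.prodMk hscale).congr_fderiv ?_
  ext <;> simp <;> field_simp
  ring

lemma abs_det_zScoreEquivFDeriv (hx : xl < xu) (hp : p.1 < p.2) :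
    |(zScoreEquivFDeriv xl xu p).det| = (xu - xl) ^ 2 / (p.2 - p.1) ^ 3 := by
  have hp' : 0 < p.2 - p.1 := sub_pos.2 hp
  have hx' : 0 < xu - xl := sub_pos.2 hx
  rw [← abs_of_pos (a := (xu - xl) ^ 2 / (p.2 - p.1) ^ 3) (by positivity)]
  simp only [zScoreEquivFDeriv, LinearMap.det_toContinuousLinearMap, LinearMap.det_toLin,
    Matrix.det_fin_two_of]
  congr 1
  field_simp

variable {g : ℝ → ℝ} {E : Type*} [NormedAddCommGroup E] [NormedSpace ℝ E]

lemma abs_det_smul_locScalePDF_smul (hg_nonneg : ∀ x, 0 ≤ g x) (hx : xl < xu) (hp : p.1 < p.2)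
    (v : E) :
    |(zScoreEquivFDeriv xl xu p).det| •
        (locScalePDF g (zScoreEquiv hx p).1 (zScoreEquiv hx p).2 xl *
          locScalePDF g (zScoreEquiv hx p).1 (zScoreEquiv hx p).2 xu) • v =
      (ENNReal.ofReal (g p.1) * ENNReal.ofReal (g p.2)).toReal • (p.2 - p.1)⁻¹ • v := by
  have hp' : p.2 - p.1 ≠ 0 := (sub_pos.2 hp).ne'
  have hx' : xu - xl ≠ 0 := (sub_pos.2 hx).ne'
  obtain ⟨hzl, hzu⟩ := Prod.ext_iff.1 ((zScoreEquiv hx).left_inv hp)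
  change (xl - (zScoreEquiv hx p).1) / (zScoreEquiv hx p).2 = p.1 at hzl
  change (xu - (zScoreEquiv hx p).1) / (zScoreEquiv hx p).2 = p.2 at hzu
  have hscale : (zScoreEquiv hx p).2 = (xu - xl) / (p.2 - p.1) := rfl
  rw [abs_det_zScoreEquivFDeriv hx hp, locScalePDF, locScalePDF, hzl, hzu, hscale,
    ENNReal.toReal_mul, ENNReal.toReal_ofReal (hg_nonneg _), ENNReal.toReal_ofReal (hg_nonneg _),
    smul_smul, smul_smul]
  congr 1
  field_simp

lemma aemeasurable_ofReal_mul_ofReal (hg_meas : AEMeasurable g) :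
    AEMeasurable (fun p : ℝ × ℝ ↦ ENNReal.ofReal (g p.1) * ENNReal.ofReal (g p.2))
      (volume.prod volume) :=
  hg_meas.ennreal_ofReal.comp_fst.mul hg_meas.ennreal_ofReal.comp_snd

lemma setIntegral_locScalePDF_smul (hg_nonneg : ∀ x, 0 ≤ g x) (hg_meas : AEMeasurable g)
    (hx : xl < xu) (F : ℝ × ℝ → E) :
    ∫ q in {q : ℝ × ℝ | 0 < q.2}, (locScalePDF g q.1 q.2 xl * locScalePDF g q.1 q.2 xu) • F q =
      ∫ p in {p : ℝ × ℝ | p.1 < p.2}, (p.2 - p.1)⁻¹ • F (zScoreEquiv hx p)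
        ∂(volume.withDensity fun x ↦ ENNReal.ofReal (g x)).prod
          (volume.withDensity fun x ↦ ENNReal.ofReal (g x)) := by
  rw [← image_zScoreEquiv hx, integral_image_eq_integral_abs_det_fderiv_smul volume
      (s := {p : ℝ × ℝ | p.1 < p.2}) measurableSet_lt'
      (fun p hp ↦ (hasFDerivAt_zScoreEquiv hx hp).hasFDerivWithinAt) (zScoreEquiv hx).injOn,
    prod_withDensity₀ hg_meas.ennreal_ofReal hg_meas.ennreal_ofReal,
    setIntegral_withDensity_eq_setIntegral_toReal_smul₀
      (aemeasurable_ofReal_mul_ofReal hg_meas).restrict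
      (ae_of_all _ fun p ↦ by finiteness) _ measurableSet_lt']
  exact setIntegral_congr_fun measurableSet_lt' fun p hp ↦
    abs_det_smul_locScalePDF_smul hg_nonneg hx hp _

lemma integrableOn_locScalePDF_smul_iff (hg_nonneg : ∀ x, 0 ≤ g x) (hg_meas : AEMeasurable g)
    (hx : xl < xu) (F : ℝ × ℝ → E) :
    IntegrableOn (fun q ↦ (locScalePDF g q.1 q.2 xl * locScalePDF g q.1 q.2 xu) • F q)
        {q : ℝ × ℝ | 0 < q.2} ↔
      IntegrableOn (fun p ↦ (p.2 - p.1)⁻¹ • F (zScoreEquiv hx p)) {p : ℝ × ℝ | p.1 < p.2}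
        ((volume.withDensity fun x ↦ ENNReal.ofReal (g x)).prod
          (volume.withDensity fun x ↦ ENNReal.ofReal (g x))) := by
  rw [← image_zScoreEquiv hx, integrableOn_image_iff_integrableOn_abs_det_fderiv_smul volume
      (s := {p : ℝ × ℝ | p.1 < p.2}) measurableSet_lt'
      (fun p hp ↦ (hasFDerivAt_zScoreEquiv hx hp).hasFDerivWithinAt) (zScoreEquiv hx).injOn,
    prod_withDensity₀ hg_meas.ennreal_ofReal hg_meas.ennreal_ofReal, IntegrableOn, IntegrableOn,
    restrict_withDensity measurableSet_lt',
    integrable_withDensity_iff_integrable_smul₀' (aemeasurable_ofReal_mul_ofReal hg_meas).restrict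
      (ae_of_all _ fun p ↦ by finiteness)]
  exact integrableOn_congr_fun
    (fun p hp ↦ abs_det_smul_locScalePDF_smul hg_nonneg hx hp _) measurableSet_lt'

end ChangeOfVariables

section OrderStatistics

variable {g G : ℝ → ℝ} {m l u : ℕ}

lemma orderStatLik_eq_dirichletKernel_mul (hl : 1 ≤ l) (hlu : l < u) (hum : u ≤ m)
    (μ τ xl xu : ℝ) :
    orderStatLik g G m l u μ τ xl xu =
      dirichletKernel (l - 1) (u - l - 1) (m - u)
        (Prod.map G G ((xl - μ) / τ, (xu - μ) / τ)) *
      (locScalePDF g μ τ xl * locScalePDF g μ τ xu) := by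
  have hsum : l - 1 + (u - l - 1) + (m - u) + 2 = m := by lia
  simp only [orderStatLik, dirichletKernel, locScaleCDF, Prod.map, hsum]
  ring

variable {E : Type*} [NormedAddCommGroup E] [NormedSpace ℝ E]

lemma setIntegral_orderStatLik_smul (hg_nonneg : ∀ x, 0 ≤ g x) (hg_meas : AEMeasurable g)
    (hl : 1 ≤ l) (hlu : l < u) (hum : u ≤ m) {xl xu : ℝ} (hx : xl < xu) (π : ℝ × ℝ → E) :
    ∫ q in {q : ℝ × ℝ | 0 < q.2}, orderStatLik g G m l u q.1 q.2 xl xu • π q =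
      ∫ p in {p : ℝ × ℝ | p.1 < p.2},
        dirichletKernel (l - 1) (u - l - 1) (m - u) (Prod.map G G p) •
          (p.2 - p.1)⁻¹ • π (zScoreEquiv hx p)
        ∂(volume.withDensity fun x ↦ ENNReal.ofReal (g x)).prod
          (volume.withDensity fun x ↦ ENNReal.ofReal (g x)) := by
  have hlik (q : ℝ × ℝ) : orderStatLik g G m l u q.1 q.2 xl xu • π q =
      (locScalePDF g q.1 q.2 xl * locScalePDF g q.1 q.2 xu) •
        dirichletKernel (l - 1) (u - l - 1) (m - u) (Prod.map G G ((zScoreEquiv hx).symm q)) •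
          π q := by
    rw [orderStatLik_eq_dirichletKernel_mul hl hlu hum, smul_smul, mul_comm]
    rfl
  simp_rw [hlik]
  rw [setIntegral_locScalePDF_smul hg_nonneg hg_meas hx]
  refine setIntegral_congr_fun measurableSet_lt' fun p hp ↦ ?_
  rw [(zScoreEquiv hx).left_inv hp, smul_comm]

lemma integrableOn_orderStatLik_two_one_two_smul_iff (hg_nonneg : ∀ x, 0 ≤ g x)
    (hg_meas : AEMeasurable g) {xl xu : ℝ} (hx : xl < xu) (π : ℝ × ℝ → E) :
    IntegrableOn (fun q ↦ orderStatLik g G 2 1 2 q.1 q.2 xl xu • π q) {q : ℝ × ℝ | 0 < q.2} ↔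
      IntegrableOn (fun p ↦ (p.2 - p.1)⁻¹ • π (zScoreEquiv hx p)) {p : ℝ × ℝ | p.1 < p.2}
        ((volume.withDensity fun x ↦ ENNReal.ofReal (g x)).prod
          (volume.withDensity fun x ↦ ENNReal.ofReal (g x))) := by
  have hlik (q : ℝ × ℝ) : orderStatLik g G 2 1 2 q.1 q.2 xl xu • π q =
      (2 : ℝ) • (locScalePDF g q.1 q.2 xl * locScalePDF g q.1 q.2 xu) • π q := by
    simp [orderStatLik, smul_smul, mul_assoc]
  simp_rw [hlik]
  rw [← integrableOn_locScalePDF_smul_iff hg_nonneg hg_meas hx]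
  exact integrable_smul_iff two_ne_zero _

end OrderStatistics

section Ranks

lemma tendsto_add_div_add_of_tendsto_div_succ {a : ℕ → ℝ} {p : ℝ}
    (ha : Tendsto (fun m : ℕ ↦ a m / (m + 1)) atTop (𝓝 p)) (c d : ℝ) :
    Tendsto (fun m : ℕ ↦ (a m + c) / (m + d)) atTop (𝓝 p) := by
  have hatTop : Tendsto (fun m : ℕ ↦ (m : ℝ) + d) atTop atTop :=
    tendsto_atTop_add_const_right _ d tendsto_natCast_atTop_atTop
  have hinv : Tendsto (fun m : ℕ ↦ ((m : ℝ) + d)⁻¹) atTop (𝓝 0) := hatTop.inv_tendsto_atTop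
  have hlim := (ha.mul ((hinv.const_mul (1 - d)).const_add 1)).add (hinv.const_mul c)
  simp only [mul_zero, add_zero, mul_one] at hlim
  refine hlim.congr' ?_
  filter_upwards [hatTop.eventually_gt_atTop 0] with m hm
  field_simp
  ring

variable {l u : ℕ → ℕ} {pl pu : ℝ}

lemma eventually_ranks_ordered (hpl : 0 < pl) (hplu : pl < pu) (hpu : pu < 1)
    (hl : Tendsto (fun m : ℕ ↦ (l m : ℝ) / (m + 1)) atTop (𝓝 pl))
    (hu : Tendsto (fun m : ℕ ↦ (u m : ℝ) / (m + 1)) atTop (𝓝 pu)) :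
    ∀ᶠ m in atTop, 1 ≤ l m ∧ l m < u m ∧ u m ≤ m := by
  filter_upwards [hl.eventually_const_lt hpl, hl.eventually_lt hu hplu, hu.eventually_lt_const hpu]
    with m hpos hlt hlt_one
  have hm : (0 : ℝ) < m + 1 := by positivity
  rw [div_lt_one hm] at hlt_one
  refine ⟨?_, ?_, ?_⟩
  · exact Nat.one_le_iff_ne_zero.2 fun h ↦ by simp [h] at hpos
  · exact_mod_cast (div_lt_div_iff_of_pos_right hm).1 hlt
  · exact Nat.lt_succ_iff.1 (by exact_mod_cast hlt_one)

lemma tendsto_rank_exponents_atTop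
    (hranks : ∀ᶠ m in atTop, 1 ≤ l m ∧ l m < u m ∧ u m ≤ m) :
    Tendsto (fun m ↦ (l m - 1) + (u m - l m - 1) + (m - u m)) atTop atTop := by
  refine (tendsto_sub_atTop_nat 2).congr' ?_
  filter_upwards [hranks] with m hm
  lia

lemma tendsto_rank_exponent_ratios
    (hranks : ∀ᶠ m in atTop, 1 ≤ l m ∧ l m < u m ∧ u m ≤ m)
    (hl : Tendsto (fun m : ℕ ↦ (l m : ℝ) / (m + 1)) atTop (𝓝 pl))
    (hu : Tendsto (fun m : ℕ ↦ (u m : ℝ) / (m + 1)) atTop (𝓝 pu)) :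
    Tendsto (fun m ↦
      (((l m - 1 : ℕ) : ℝ) / ((l m - 1) + (u m - l m - 1) + (m - u m) : ℕ),
        1 - ((m - u m : ℕ) : ℝ) / ((l m - 1) + (u m - l m - 1) + (m - u m) : ℕ)))
      atTop (𝓝 (pl, pu)) := by
  refine ((tendsto_add_div_add_of_tendsto_div_succ hl (-1) (-2)).prodMk_nhds
    (tendsto_add_div_add_of_tendsto_div_succ hu (-2) (-2))).congr' ?_
  filter_upwards [hranks, eventually_ge_atTop 3] with m ⟨hl1, hlu, hum⟩ hm
  have hsum : (l m - 1) + (u m - l m - 1) + (m - u m) = m - 2 := by lia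
  have hne : (m : ℝ) - 2 ≠ 0 := by
    have : (3 : ℝ) ≤ m := by exact_mod_cast hm
    linarith
  rw [hsum, Nat.cast_sub hl1, Nat.cast_sub hum, Nat.cast_sub (by lia : 2 ≤ m)]
  push_cast
  simp only [← sub_eq_add_neg]
  congr 1
  field_simp
  ring

end Ranks

lemma cdf_pos_of_unique_quantile (P : Measure ℝ) {q : ℝ} (hq : ∀ x, cdf P x = cdf P q → x = q) :
    0 < cdf P q := by
  refine (ProbabilityTheory.cdf_nonneg P q).lt_of_ne' fun h ↦ (sub_one_lt q).ne (hq _ ?_)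
  exact (ProbabilityTheory.monotone_cdf P (sub_one_lt q).le).antisymm
    (h ▸ ProbabilityTheory.cdf_nonneg P _)

lemma cdf_lt_one_of_unique_quantile (P : Measure ℝ) {q : ℝ}
    (hq : ∀ x, cdf P x = cdf P q → x = q) : cdf P q < 1 := by
  refine (ProbabilityTheory.cdf_le_one P q).lt_of_ne fun h ↦ (lt_add_one q).ne' (hq _ ?_)
  exact ((ProbabilityTheory.cdf_le_one P _).trans h.ge).antisymm
    (ProbabilityTheory.monotone_cdf P (lt_add_one q).le)

theorem hierarchical_generative_tendsto_descriptive_general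
    {g : ℝ → ℝ} (hg_nonneg : ∀ x, 0 ≤ g x) (hg_prob : ∫ x, g x = 1)
    {G : ℝ → ℝ} (hG : ∀ x, G x = ∫ t in Set.Iic x, g t)
    {ql qu : ℝ} (hq : ql < qu) (hql : ∀ x, G x = G ql → x = ql) (hqu : ∀ x, G x = G qu → x = qu)
    {l u : ℕ → ℕ} (hl_lim : Tendsto (fun m : ℕ ↦ (l m : ℝ) / (m + 1)) atTop (𝓝 (G ql)))
    (hu_lim : Tendsto (fun m : ℕ ↦ (u m : ℝ) / (m + 1)) atTop (𝓝 (G qu)))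
    {xl xu : ℝ} (hx : xl < xu)
    {E : Type*} [NormedAddCommGroup E] [NormedSpace ℝ E] [CompleteSpace E] {π : ℝ × ℝ → E}
    (hπ_int : IntegrableOn (fun q ↦ orderStatLik g G 2 1 2 q.1 q.2 xl xu • π q)
      {q : ℝ × ℝ | 0 < q.2})
    (hπ_cont : ContinuousAt π (xl - (xu - xl) / (qu - ql) * ql, (xu - xl) / (qu - ql))) :
    Tendsto
      (fun m ↦ ∫ q in {q : ℝ × ℝ | 0 < q.2}, orderStatLik g G m (l m) (u m) q.1 q.2 xl xu • π q)
      atTop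
      (𝓝 ((qu - ql)⁻¹ • π (xl - (xu - xl) / (qu - ql) * ql, (xu - xl) / (qu - ql)))) := by
  have hg_int : Integrable g := integrable_of_integral_eq_one hg_prob
  have hg_meas : AEMeasurable g := hg_int.aemeasurable
  set P := volume.withDensity fun x ↦ ENNReal.ofReal (g x)
  have : IsProbabilityMeasure P := isProbabilityMeasure_withDensity_ofReal hg_nonneg hg_prob
  obtain rfl : G = cdf P :=
    funext fun x ↦ (hG x).trans (cdf_withDensity_ofReal hg_nonneg hg_int x).symm
  have hplu : cdf P ql < cdf P qu :=
    (ProbabilityTheory.monotone_cdf P hq.le).lt_of_ne fun h ↦ hq.ne (hqu _ h)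
  have hranks := eventually_ranks_ordered (cdf_pos_of_unique_quantile P hql) hplu
    (cdf_lt_one_of_unique_quantile P hqu) hl_lim hu_lim
  have hcont : ContinuousAt (fun p ↦ (p.2 - p.1)⁻¹ • π (zScoreEquiv hx p)) (ql, qu) :=
    .smul (.inv₀ (by fun_prop) (sub_pos.2 hq).ne')
      (.comp (f := zScoreEquiv hx) hπ_cont (hasFDerivAt_zScoreEquiv hx hq).continuousAt)
  refine (tendsto_setIntegral_dirichletKernel_cdf_smul P hql hqu
    (tendsto_rank_exponents_atTop hranks) (tendsto_rank_exponent_ratios hranks hl_lim hu_lim)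
    ((integrableOn_orderStatLik_two_one_two_smul_iff hg_nonneg hg_meas hx π).1 hπ_int)
    hcont.continuousWithinAt).congr' ?_
  filter_upwards [hranks] with m ⟨hl, hlu, hum⟩
  exact (setIntegral_orderStatLik_smul hg_nonneg hg_meas hl hlu hum hx π).symm

/-- **Theorem 7 of the paper.** For a location–scale family built from a
density `g` with cdf `G`, quantiles `G(q̲) = p̲`, `G(q̄) = p̄` with `0 < p̲ < p̄ < 1`,
`g` positive and continuous near `q̲` and `q̄`, a twice continuously differentiable
mixing density `π(μ, τ)` on `ℝ × (0,∞)` with integrable mixtures, and order-statistic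
ranks `l_m/(m+1) → p̲`, `u_m/(m+1) → p̄`, the hierarchical generative density
`∫₀^∞∫_ℝ f⋆(x̲, x̄ | μ, τ, m, l_m, u_m) π(μ,τ) dμ dτ` converges, for every `x̲ < x̄`, to
`π(μ*, τ*)/(q̄ − q̲)` where `τ* = (x̄−x̲)/(q̄−q̲)` and `μ* = x̲ − τ*·q̲`. -/
theorem hierarchical_generative_tendsto_descriptive
    (g : ℝ → ℝ) (hg_nonneg : ∀ x, 0 ≤ g x) (hg_meas : Measurable g)
    (hg_prob : ∫ x, g x = 1)
    (G : ℝ → ℝ) (hG : ∀ x, G x = ∫ t in Set.Iic x, g t)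
    (pl pu : ℝ) (hpl : 0 < pl) (hplu : pl < pu) (hpu : pu < 1)
    (ql qu : ℝ) (hq : ql < qu) (hGl : G ql = pl) (hGu : G qu = pu)
    (hg_ql : ∃ U ∈ nhds ql, ContinuousOn g U ∧ ∀ x ∈ U, 0 < g x)
    (hg_qu : ∃ U ∈ nhds qu, ContinuousOn g U ∧ ∀ x ∈ U, 0 < g x)
    (π : ℝ × ℝ → ℝ) (hπ_nonneg : ∀ q, 0 ≤ π q)
    (hπ_smooth : ContDiffOn ℝ 2 π {q : ℝ × ℝ | 0 < q.2})
    (hπ_prob : ∫ q in {q : ℝ × ℝ | 0 < q.2}, π q = 1)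
    (hπ_int : ∀ (m l u : ℕ), 1 ≤ l → l < u → u ≤ m → ∀ xl xu : ℝ, xl ≤ xu →
      IntegrableOn (fun q : ℝ × ℝ => orderStatLik g G m l u q.1 q.2 xl xu * π q)
        {q : ℝ × ℝ | 0 < q.2})
    (l u : ℕ → ℕ) (hlu : ∀ m : ℕ, 2 ≤ m → 1 ≤ l m ∧ l m < u m ∧ u m ≤ m)
    (hl_lim : Tendsto (fun m : ℕ => (l m : ℝ) / ((m : ℝ) + 1)) atTop (nhds pl))
    (hu_lim : Tendsto (fun m : ℕ => (u m : ℝ) / ((m : ℝ) + 1)) atTop (nhds pu)) :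
    ∀ xl xu : ℝ, xl < xu →
      Tendsto
        (fun m : ℕ =>
          ∫ q in {q : ℝ × ℝ | 0 < q.2},
            orderStatLik g G m (l m) (u m) q.1 q.2 xl xu * π q)
        atTop
        (nhds (π (xl - ((xu - xl) / (qu - ql)) * ql, (xu - xl) / (qu - ql)) /
          (qu - ql))) := by
  intro xl xu hx
  have hg_int : Integrable g := integrable_of_integral_eq_one hg_prob
  obtain ⟨Ul, hUl, -, hgl⟩ := hg_ql
  obtain ⟨Uu, hUu, -, hgu⟩ := hg_qu
  have hscale : 0 < (xu - xl) / (qu - ql) := div_pos (sub_pos.2 hx) (sub_pos.2 hq)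
  simpa only [smul_eq_mul, div_eq_inv_mul _ (qu - ql)] using
    hierarchical_generative_tendsto_descriptive_general hg_nonneg hg_prob hG hq
      (eq_of_cdf_eq_of_eventually_pos hg_nonneg hg_int hG (eventually_of_mem hUl hgl))
      (eq_of_cdf_eq_of_eventually_pos hg_nonneg hg_int hG (eventually_of_mem hUu hgu))
      (hGl ▸ hl_lim) (hGu ▸ hu_lim) hx (hπ_int 2 1 2 le_rfl one_lt_two le_rfl xl xu hx.le)
      (hπ_smooth.continuousOn.continuousAt
        ((isOpen_lt continuous_const continuous_snd).mem_nhds hscale))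
end

section
/- Fix an integer p ≥ 1. Let P be a Borel probability measure on ℝ^{2p}, with coordinates written as (y̲₁, ȳ₁, …, y̲_p, ȳ_p), such that P({y : y̲_j ≤ ȳ_j for all j = 1,…,p}) = 1, and let F(x̲₁, x̄₁, …, x̲_p, x̄_p) := P({y : x̲_j ≤ y̲_j ≤ ȳ_j ≤ x̄_j for all j = 1,…,p}) be its containment distribution function. If F is 2p-times continuously differentiable on ℝ^{2p}, then P is absolutely continuous with respect to Lebesgue measure on ℝ^{2p} with density (−1)^p · ∂^{2p}F/∂x̲₁∂x̄₁⋯∂x̲_p∂x̄_p. -/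
open MeasureTheory

/-- Partial derivative of `F : 𝕀^p-coordinates → ℝ` with respect to the lower endpoint
of the `j`-th coordinate pair. -/
noncomputable def pderivLo {p : ℕ} (j : Fin p) (F : (Fin p → ℝ × ℝ) → ℝ)
    (x : Fin p → ℝ × ℝ) : ℝ :=
  deriv (fun t => F (Function.update x j (t, (x j).2))) (x j).1

/-- Partial derivative with respect to the upper endpoint of the `j`-th coordinate pair. -/
noncomputable def pderivHi {p : ℕ} (j : Fin p) (F : (Fin p → ℝ × ℝ) → ℝ)
    (x : Fin p → ℝ × ℝ) : ℝ :=
  deriv (fun t => F (Function.update x j ((x j).1, t))) (x j).2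

/-- The `2p`-th order mixed partial derivative `∂^{2p}F/∂x̲₁∂x̄₁⋯∂x̲_p∂x̄_p`. -/
noncomputable def mixedContainmentDeriv (p : ℕ) (F : (Fin p → ℝ × ℝ) → ℝ) :
    (Fin p → ℝ × ℝ) → ℝ :=
  (List.finRange p).foldr (fun j G => pderivLo j (pderivHi j G)) F

/-!
A half-open rectangle of endpoint pairs `(y̲, ȳ)` is a combination of four containment orthants, so
its mass is minus the second difference of the distribution function in that pair. By the
fundamental theorem of calculus this second difference is the integral of `∂²/∂x̲∂x̄` over the
rectangle. Treating one pair at a time, with the law of the remaining pairs restricted to the event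
that the treated pair lies in an orthant, shows that `P` and the signed density
`f = (-1)^p ∂^{2p}F` give the same mass to every box. Boxes form a generating `π`-system, so
`P + f⁻ dx = f⁺ dx`. Evaluating on `{f < 0}` gives `f⁻ dx = 0`, so the nonnegativity of `f` need not
be proved beforehand.
-/

section

open Set

variable {ι : Type*} {p : ℕ}

/-- The endpoint pairs of the intervals contained in `[c.1, c.2]`, without the constraint that the
lower endpoint be at most the upper one. -/
def containmentOrthant (c : ℝ × ℝ) : Set (ℝ × ℝ) := Ici c.1 ×ˢ Iic c.2

/-- The rectangle with opposite corners `a` and `b`. Each factor is half-open on the side that makes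
it a difference of the factors of two containment orthants. -/
def endpointRect (a b : ℝ × ℝ) : Set (ℝ × ℝ) := Ico a.1 b.1 ×ˢ Ioc a.2 b.2

/-- The product of the rectangles `endpointRect (lo j) (hi j)`. These boxes generate the Borel sets
of `ι → ℝ × ℝ`. -/
def endpointBox (lo hi : ι → ℝ × ℝ) : Set (ι → ℝ × ℝ) :=
  univ.pi fun j ↦ endpointRect (lo j) (hi j)

/-- The containment distribution function of `P`, with containment read off the orthants; it agrees
with the usual one when `P` is concentrated on `{y | ∀ j, (y j).1 ≤ (y j).2}`. -/
noncomputable def containmentCDF (P : Measure (ι → ℝ × ℝ)) (x : ι → ℝ × ℝ) : ℝ :=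
  P.real (univ.pi fun j ↦ containmentOrthant (x j))

/-- The mixed second difference of `f` over the rectangle with opposite corners `a` and `b`. -/
def rectIncrement {E : Type*} [AddCommGroup E] (f : ℝ × ℝ → E) (a b : ℝ × ℝ) : E :=
  f (b.1, b.2) - f (b.1, a.2) - (f (a.1, b.2) - f (a.1, a.2))

/-- The mixed derivative of `F` in the endpoint pairs listed in `l`, the last listed pair being
differentiated first; `mixedContainmentDeriv` is the case of the list of all indices. -/
noncomputable def mixedPairDeriv (l : List (Fin p)) (F : (Fin p → ℝ × ℝ) → ℝ) :
    (Fin p → ℝ × ℝ) → ℝ :=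
  l.foldr (fun j G ↦ pderivLo j (pderivHi j G)) F

section CalculusLemmas

variable {𝕜 E G : Type*} [NontriviallyNormedField 𝕜] [NormedAddCommGroup E] [NormedSpace 𝕜 E]
  [NormedAddCommGroup G] [NormedSpace 𝕜 G] {n : WithTop ℕ∞}

lemma contDiff_deriv_uncurry {f : E → 𝕜 → G} (hf : ContDiff 𝕜 (n + 1) (Function.uncurry f))
    {g : E → 𝕜} (hg : ContDiff 𝕜 n g) : ContDiff 𝕜 n fun x ↦ deriv (f x) (g x) :=
  (hf.fderiv hg le_rfl).clm_apply contDiff_const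

lemma contDiff_update_uncurry [Fintype ι] [DecidableEq ι] (j : ι) :
    ContDiff 𝕜 n fun q : (ι → E) × E ↦ Function.update q.1 j q.2 := by
  refine contDiff_pi.2 fun i ↦ ?_
  rcases eq_or_ne i j with rfl | hij
  · simpa using contDiff_snd
  · simp only [Function.update_of_ne hij]
    fun_prop

lemma contDiff_finCons :
    ContDiff 𝕜 n fun q : E × (Fin p → E) ↦ (Fin.cons q.1 q.2 : Fin (p + 1) → E) :=
  (Fin.consEquivL 𝕜 fun _ : Fin (p + 1) ↦ E).contDiff

end CalculusLemmas

section PartialDerivatives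

variable {F : (Fin p → ℝ × ℝ) → ℝ} {n : WithTop ℕ∞}

lemma contDiff_pderivLo (hF : ContDiff ℝ (n + 1) F) (j : Fin p) : ContDiff ℝ n (pderivLo j F) := by
  refine contDiff_deriv_uncurry (f := fun x t ↦ F (Function.update x j (t, (x j).2)))
    (hF.comp ((contDiff_update_uncurry j).comp
      (f := fun q : (Fin p → ℝ × ℝ) × ℝ ↦ (q.1, q.2, (q.1 j).2)) ?_)) ?_ <;> fun_prop

lemma contDiff_pderivHi (hF : ContDiff ℝ (n + 1) F) (j : Fin p) : ContDiff ℝ n (pderivHi j F) := by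
  refine contDiff_deriv_uncurry (f := fun x t ↦ F (Function.update x j ((x j).1, t)))
    (hF.comp ((contDiff_update_uncurry j).comp
      (f := fun q : (Fin p → ℝ × ℝ) × ℝ ↦ (q.1, (q.1 j).1, q.2)) ?_)) ?_ <;> fun_prop

lemma contDiff_mixedPairDeriv {l : List (Fin p)} (hF : ContDiff ℝ (n + 2 * l.length) F) :
    ContDiff ℝ n (mixedPairDeriv l F) := by
  induction l generalizing n with
  | nil => simpa [mixedPairDeriv] using hF
  | cons j l ih =>
    refine contDiff_pderivLo (contDiff_pderivHi (ih ?_) j) j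
    convert hF using 1
    push_cast [List.length_cons]
    ring

lemma continuous_mixedContainmentDeriv (hF : ContDiff ℝ (2 * p) F) :
    Continuous (mixedContainmentDeriv p F) :=
  (contDiff_mixedPairDeriv (n := 0) (l := List.finRange p) (by simpa using hF)).continuous

lemma mixedPairDeriv_map_succ_cons (l : List (Fin p)) (F : (Fin (p + 1) → ℝ × ℝ) → ℝ)
    (c : ℝ × ℝ) (z : Fin p → ℝ × ℝ) :
    mixedPairDeriv (l.map Fin.succ) F (Fin.cons c z) =
      mixedPairDeriv l (fun w ↦ F (Fin.cons c w)) z := by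
  induction l generalizing z with
  | nil => rfl
  | cons j l ih =>
    simp only [mixedPairDeriv, List.map_cons, List.foldr_cons] at ih ⊢
    simp only [pderivLo, pderivHi, ← Fin.cons_update, Fin.cons_succ, ih]

lemma mixedContainmentDeriv_succ_cons (F : (Fin (p + 1) → ℝ × ℝ) → ℝ) (c : ℝ × ℝ)
    (z : Fin p → ℝ × ℝ) :
    mixedContainmentDeriv (p + 1) F (Fin.cons c z) =
      deriv (fun s ↦ deriv (fun t ↦
        mixedPairDeriv ((List.finRange p).map Fin.succ) F (Fin.cons (s, t) z)) c.2) c.1 := by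
  simp only [mixedContainmentDeriv, mixedPairDeriv, List.finRange_succ, List.foldr_cons, pderivLo,
    pderivHi, Fin.update_cons_zero, Fin.cons_zero]

end PartialDerivatives

lemma setIntegral_prod_right_left {α β E : Type*} [MeasurableSpace α] [MeasurableSpace β]
    {μ : Measure α} {ν : Measure β} [SFinite μ] [SFinite ν] [NormedAddCommGroup E]
    [NormedSpace ℝ E] {f : α × β → E} {s : Set α} {t : Set β}
    (hf : IntegrableOn f (s ×ˢ t) (μ.prod ν)) :
    ∫ q in s ×ˢ t, f q ∂μ.prod ν = ∫ y in t, ∫ x in s, f (x, y) ∂μ ∂ν := by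
  rw [IntegrableOn, ← Measure.prod_restrict] at hf
  rw [← Measure.prod_restrict, integral_prod_symm f hf]

lemma endpointRect_subset_Icc (a b : ℝ × ℝ) : endpointRect a b ⊆ Icc a b :=
  (prod_mono Ico_subset_Icc_self Ioc_subset_Icc_self).trans (Icc_prod_eq a b).superset

lemma endpointBox_subset_Icc (lo hi : ι → ℝ × ℝ) : endpointBox lo hi ⊆ Icc lo hi :=
  (pi_mono fun j _ ↦ endpointRect_subset_Icc (lo j) (hi j)).trans (pi_univ_Icc lo hi).subset

lemma measurableSet_endpointRect (a b : ℝ × ℝ) : MeasurableSet (endpointRect a b) :=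
  measurableSet_Ico.prod measurableSet_Ioc

lemma measurableSet_endpointBox [Countable ι] (lo hi : ι → ℝ × ℝ) :
    MeasurableSet (endpointBox lo hi) :=
  MeasurableSet.univ_pi fun _ ↦ measurableSet_endpointRect _ _

lemma measurableSet_containmentOrthant (c : ℝ × ℝ) : MeasurableSet (containmentOrthant c) :=
  measurableSet_Ici.prod measurableSet_Iic

section SecondDifference

variable {E : Type*} [NormedAddCommGroup E] [NormedSpace ℝ E] {a b : ℝ × ℝ}

lemma setIntegral_endpointRect_deriv_deriv [CompleteSpace E] {g : ℝ × ℝ → E}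
    (hg : ContDiff ℝ 2 g) (hab : a ≤ b) :
    ∫ c in endpointRect a b, deriv (fun s ↦ deriv (fun t ↦ g (s, t)) c.2) c.1 =
      rectIncrement g a b := by
  set g₂ : ℝ × ℝ → E := fun c ↦ deriv (fun t ↦ g (c.1, t)) c.2
  have hg₂ : ContDiff ℝ 1 g₂ :=
    contDiff_deriv_uncurry (f := fun c t ↦ g (c.1, t)) (by fun_prop) contDiff_snd
  have hg₁₂ : Continuous fun c : ℝ × ℝ ↦ deriv (fun s ↦ g₂ (s, c.2)) c.1 :=
    (contDiff_deriv_uncurry (n := 0) (f := fun c s ↦ g₂ (s, c.2)) (by fun_prop)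
      contDiff_fst).continuous
  have hg_diff : Differentiable ℝ g := hg.differentiable two_ne_zero
  have hg₂_diff : Differentiable ℝ g₂ := hg₂.differentiable one_ne_zero
  have hg₂_cont : Continuous g₂ := hg₂.continuous
  have hinner (t : ℝ) :
      ∫ s in Ico a.1 b.1, deriv (fun s ↦ g₂ (s, t)) s = g₂ (b.1, t) - g₂ (a.1, t) := by
    rw [integral_Ico_eq_integral_Ioc, ← intervalIntegral.integral_of_le hab.1]
    exact intervalIntegral.integral_deriv_eq_sub'
      (fun s ↦ g₂ (s, t)) rfl (by fun_prop) (by fun_prop)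
  have houter (s : ℝ) : ∫ t in a.2..b.2, g₂ (s, t) = g (s, b.2) - g (s, a.2) :=
    intervalIntegral.integral_deriv_eq_sub' (fun t ↦ g (s, t)) rfl (by fun_prop) (by fun_prop)
  have hg₂_int (s : ℝ) : IntervalIntegrable (fun t ↦ g₂ (s, t)) volume a.2 b.2 :=
    Continuous.intervalIntegrable (by fun_prop) _ _
  calc ∫ c in endpointRect a b, deriv (fun s ↦ g₂ (s, c.2)) c.1
      = ∫ t in Ioc a.2 b.2, ∫ s in Ico a.1 b.1, deriv (fun s ↦ g₂ (s, t)) s :=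
        setIntegral_prod_right_left
          ((hg₁₂.continuousOn.integrableOn_compact isCompact_Icc).mono_set
            (endpointRect_subset_Icc a b))
    _ = ∫ t in a.2..b.2, (g₂ (b.1, t) - g₂ (a.1, t)) := by
        simp only [hinner, intervalIntegral.integral_of_le hab.2]
    _ = rectIncrement g a b := by
        rw [intervalIntegral.integral_sub (hg₂_int _) (hg₂_int _), houter, houter,
          rectIncrement]

lemma integral_rectIncrement {α : Type*} [MeasurableSpace α] {μ : Measure α}
    {f : ℝ × ℝ → α → E} (hf : ∀ c, Integrable (f c) μ) (a b : ℝ × ℝ) :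
    ∫ z, rectIncrement (fun c ↦ f c z) a b ∂μ = rectIncrement (fun c ↦ ∫ z, f c z ∂μ) a b := by
  have hdiff (s : ℝ) : Integrable (fun z ↦ f (s, b.2) z - f (s, a.2) z) μ := (hf _).sub (hf _)
  simp only [rectIncrement]
  rw [integral_sub (hdiff _) (hdiff _), integral_sub (hf _) (hf _), integral_sub (hf _) (hf _)]

lemma measureReal_endpointRect (μ : Measure (ℝ × ℝ)) [IsFiniteMeasure μ] (hab : a ≤ b) :
    μ.real (endpointRect a b) = -rectIncrement (fun c ↦ μ.real (containmentOrthant c)) a b := by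
  have hsplit_hi {s : Set ℝ} (hs : MeasurableSet s) :
      μ.real (s ×ˢ Iic b.2) = μ.real (s ×ˢ Iic a.2) + μ.real (s ×ˢ Ioc a.2 b.2) := by
    rw [← Iic_union_Ioc_eq_Iic hab.2, prod_union,
      measureReal_union (Disjoint.set_prod_right (Iic_disjoint_Ioc le_rfl) _ _)
        (hs.prod measurableSet_Ioc)]
  have hsplit_lo : μ.real (Ici a.1 ×ˢ Ioc a.2 b.2) =
      μ.real (Ico a.1 b.1 ×ˢ Ioc a.2 b.2) + μ.real (Ici b.1 ×ˢ Ioc a.2 b.2) := by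
    have hdisj : Disjoint (Ico a.1 b.1) (Ici b.1) :=
      disjoint_left.2 fun _ hx hx' ↦ hx.2.not_ge hx'
    rw [← Ico_union_Ici_eq_Ici hab.1, union_prod,
      measureReal_union (Disjoint.set_prod_left hdisj _ _)
        (measurableSet_Ici.prod measurableSet_Ioc)]
  simp only [rectIncrement, containmentOrthant, endpointRect]
  linarith [hsplit_hi (measurableSet_Ici (a := a.1)), hsplit_hi (measurableSet_Ici (a := b.1))]

end SecondDifference

lemma univ_pi_succ_eq_head_tail {α : Type*} (s : Fin (p + 1) → Set α) :
    univ.pi s = {y | y 0 ∈ s 0 ∧ (Fin.tail y : Fin p → α) ∈ univ.pi fun j ↦ s j.succ} := by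
  ext y
  simp only [mem_univ_pi, Fin.forall_fin_succ, mem_ofPred_eq, Fin.tail]

section HeadTail

variable {α : Type*} [MeasurableSpace α]

/-- The law of the tail of `y` under `P`, restricted to the event that the head of `y` lies
in `A`. -/
noncomputable def tailMeasure (P : Measure (Fin (p + 1) → α)) (A : Set α) : Measure (Fin p → α) :=
  (P.restrict {y | y 0 ∈ A}).map Fin.tail

/-- The law of the head of `y` under `P`, restricted to the event that the tail of `y` lies
in `B`. -/
noncomputable def headMeasure (P : Measure (Fin (p + 1) → α)) (B : Set (Fin p → α)) : Measure α :=
  (P.restrict {y | Fin.tail y ∈ B}).map fun y ↦ y 0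

variable (P : Measure (Fin (p + 1) → α))

instance isFiniteMeasure_tailMeasure [IsFiniteMeasure P] (A : Set α) :
    IsFiniteMeasure (tailMeasure P A) := by
  unfold tailMeasure; infer_instance

instance isFiniteMeasure_headMeasure [IsFiniteMeasure P] (B : Set (Fin p → α)) :
    IsFiniteMeasure (headMeasure P B) := by
  unfold headMeasure; infer_instance

lemma tailMeasure_real_apply (A : Set α) {B : Set (Fin p → α)} (hB : MeasurableSet B) :
    (tailMeasure P A).real B = P.real {y | y 0 ∈ A ∧ Fin.tail y ∈ B} := by
  have htail : Measurable (Fin.tail : (Fin (p + 1) → α) → Fin p → α) := by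
    unfold Fin.tail; fun_prop
  rw [tailMeasure, map_measureReal_apply htail hB, measureReal_restrict_apply (htail hB),
    inter_comm]
  rfl

lemma headMeasure_real_apply {A : Set α} (hA : MeasurableSet A) (B : Set (Fin p → α)) :
    (headMeasure P B).real A = P.real {y | y 0 ∈ A ∧ Fin.tail y ∈ B} := by
  have hhead : Measurable fun y : Fin (p + 1) → α ↦ y 0 := by fun_prop
  rw [headMeasure, map_measureReal_apply hhead hA, measureReal_restrict_apply (hhead hA)]
  rfl

end HeadTail

lemma containmentCDF_tailMeasure (P : Measure (Fin (p + 1) → ℝ × ℝ)) (c : ℝ × ℝ) :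
    containmentCDF (tailMeasure P (containmentOrthant c)) =
      fun z ↦ containmentCDF P (Fin.cons c z) := by
  ext z
  rw [containmentCDF, containmentCDF, univ_pi_succ_eq_head_tail, tailMeasure_real_apply _ _
    (MeasurableSet.univ_pi fun _ ↦ measurableSet_containmentOrthant _)]
  rfl

lemma measureReal_endpointBox_succ (P : Measure (Fin (p + 1) → ℝ × ℝ))
    (lo hi : Fin (p + 1) → ℝ × ℝ) :
    P.real (endpointBox lo hi) =
      (headMeasure P (endpointBox (Fin.tail lo) (Fin.tail hi))).real
        (endpointRect (lo 0) (hi 0)) := by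
  rw [headMeasure_real_apply _ (measurableSet_endpointRect _ _), endpointBox,
    univ_pi_succ_eq_head_tail]
  rfl

section BoxIntegrals

variable {E : Type*} [NormedAddCommGroup E]

lemma integrableOn_endpointBox [Finite ι] {f : (ι → ℝ × ℝ) → E} {μ : Measure (ι → ℝ × ℝ)}
    (hf : LocallyIntegrable f μ) (lo hi : ι → ℝ × ℝ) : IntegrableOn f (endpointBox lo hi) μ :=
  (hf.integrableOn_isCompact isCompact_Icc).mono_set (endpointBox_subset_Icc lo hi)

lemma setIntegral_endpointBox_succ [NormedSpace ℝ E] {f : (Fin (p + 1) → ℝ × ℝ) → E}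
    (hf : LocallyIntegrable f) (lo hi : Fin (p + 1) → ℝ × ℝ) :
    ∫ x in endpointBox lo hi, f x =
      ∫ z in endpointBox (Fin.tail lo) (Fin.tail hi), ∫ c in endpointRect (lo 0) (hi 0),
        f (Fin.cons c z) := by
  let e := (MeasurableEquiv.piFinSuccAbove (fun _ : Fin (p + 1) ↦ ℝ × ℝ) 0).symm
  have he : MeasurePreserving e := (volume_preserving_piFinSuccAbove _ 0).symm
  have he_apply (q) : e q = Fin.cons q.1 q.2 := Fin.insertNth_zero' q.1 q.2
  have hpreimage : e ⁻¹' endpointBox lo hi =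
      endpointRect (lo 0) (hi 0) ×ˢ endpointBox (Fin.tail lo) (Fin.tail hi) := by
    ext q
    rw [mem_preimage, he_apply, endpointBox, univ_pi_succ_eq_head_tail]
    rfl
  have hint := (he.integrableOn_comp_preimage e.measurableEmbedding).2
    (integrableOn_endpointBox hf lo hi)
  rw [hpreimage] at hint
  rw [← he.setIntegral_preimage_emb e.measurableEmbedding, hpreimage]
  simpa only [Function.comp_apply, he_apply, Measure.volume_eq_prod] using
    setIntegral_prod_right_left hint

end BoxIntegrals

lemma setIntegral_endpointBox_mixedContainmentDeriv_succ {F : (Fin (p + 1) → ℝ × ℝ) → ℝ}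
    (hF : ContDiff ℝ (2 * (p + 1)) F) {lo hi : Fin (p + 1) → ℝ × ℝ} (hle : lo 0 ≤ hi 0) :
    ∫ x in endpointBox lo hi, mixedContainmentDeriv (p + 1) F x =
      rectIncrement (fun c ↦ ∫ z in endpointBox (Fin.tail lo) (Fin.tail hi),
        mixedContainmentDeriv p (fun w ↦ F (Fin.cons c w)) z) (lo 0) (hi 0) := by
  set B := endpointBox (Fin.tail lo) (Fin.tail hi)
  set G := mixedPairDeriv ((List.finRange p).map Fin.succ) F
  have hG : ContDiff ℝ 2 G := by
    refine contDiff_mixedPairDeriv ?_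
    convert hF using 1
    push_cast [List.length_map, List.length_finRange]
    ring
  have hG_cons : ContDiff ℝ 2 fun q : (ℝ × ℝ) × (Fin p → ℝ × ℝ) ↦ G (Fin.cons q.1 q.2) :=
    hG.comp contDiff_finCons
  have hG_int (c : ℝ × ℝ) : IntegrableOn (fun z ↦ G (Fin.cons c z)) B :=
    integrableOn_endpointBox
      (hG_cons.comp (contDiff_prodMk_right c)).continuous.locallyIntegrable _ _
  calc ∫ x in endpointBox lo hi, mixedContainmentDeriv (p + 1) F x
      = ∫ z in B, ∫ c in endpointRect (lo 0) (hi 0),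
          mixedContainmentDeriv (p + 1) F (Fin.cons c z) :=
        setIntegral_endpointBox_succ
          (continuous_mixedContainmentDeriv (by exact_mod_cast hF)).locallyIntegrable lo hi
    _ = ∫ z in B, rectIncrement (fun c ↦ G (Fin.cons c z)) (lo 0) (hi 0) := by
        congr! 2 with z
        simp only [mixedContainmentDeriv_succ_cons]
        exact setIntegral_endpointRect_deriv_deriv (hG_cons.comp (contDiff_prodMk_left z)) hle
    _ = rectIncrement (fun c ↦ ∫ z in B, G (Fin.cons c z)) (lo 0) (hi 0) :=
        integral_rectIncrement hG_int _ _
    _ = rectIncrement (fun c ↦ ∫ z in B,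
          mixedContainmentDeriv p (fun w ↦ F (Fin.cons c w)) z) (lo 0) (hi 0) := by
        simp only [G, mixedPairDeriv_map_succ_cons]
        rfl

theorem measureReal_endpointBox_eq_mul_setIntegral (P : Measure (Fin p → ℝ × ℝ))
    [IsFiniteMeasure P] (hP : ContDiff ℝ (2 * p) (containmentCDF P)) {lo hi : Fin p → ℝ × ℝ}
    (hle : lo ≤ hi) :
    P.real (endpointBox lo hi) =
      (-1) ^ p * ∫ x in endpointBox lo hi, mixedContainmentDeriv p (containmentCDF P) x := by
  induction p with
  | zero =>
    have hpi (s : Fin 0 → Set (ℝ × ℝ)) : univ.pi s = univ := eq_univ_of_forall fun _ j ↦ j.elim0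
    rw [endpointBox, hpi, Measure.restrict_univ, Measure.volume_pi_eq_dirac (x := fun j ↦ j.elim0)]
    simp [mixedContainmentDeriv, containmentCDF, hpi]
  | succ p ih =>
    set B := endpointBox (Fin.tail lo) (Fin.tail hi)
    have htail_le : Fin.tail lo ≤ Fin.tail hi := fun j ↦ hle j.succ
    have horthant (c : ℝ × ℝ) : (headMeasure P B).real (containmentOrthant c) =
        (-1) ^ p *
          ∫ z in B, mixedContainmentDeriv p (fun w ↦ containmentCDF P (Fin.cons c w)) z := by
      have hcons : ContDiff ℝ (2 * p) fun z ↦ containmentCDF P (Fin.cons c z) :=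
        (hP.of_le (by gcongr; simp)).comp (contDiff_finCons.comp (contDiff_prodMk_right c))
      rw [headMeasure_real_apply P (measurableSet_containmentOrthant c),
        ← tailMeasure_real_apply P _ (measurableSet_endpointBox _ _),
        ih _ (by rwa [containmentCDF_tailMeasure]) htail_le, containmentCDF_tailMeasure]
    rw [measureReal_endpointBox_succ, measureReal_endpointRect _ (hle 0),
      setIntegral_endpointBox_mixedContainmentDeriv_succ (by exact_mod_cast hP) (hle 0)]
    simp only [B, horthant, rectIncrement]
    ring

lemma isCountablySpanning_of_Ioo_subset {I : ℝ → ℝ → Set ℝ} (hI : ∀ l u, Ioo l u ⊆ I l u) :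
    IsCountablySpanning {S | ∃ l u, l < u ∧ I l u = S} := by
  refine ⟨fun n : ℕ ↦ I (-(n + 1)) (n + 1),
    fun n ↦ ⟨_, _, by linarith [n.cast_nonneg (α := ℝ)], rfl⟩, eq_univ_of_forall fun x ↦ ?_⟩
  obtain ⟨n, hn⟩ := exists_nat_gt |x|
  have hx := abs_lt.1 hn
  exact mem_iUnion.2 ⟨n, hI _ _ ⟨by linarith, by linarith⟩⟩

theorem ext_of_endpointBox [Finite ι] {μ ν : Measure (ι → ℝ × ℝ)}
    (hfin : ∀ lo hi, μ (endpointBox lo hi) ≠ ⊤)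
    (h : ∀ lo hi, lo ≤ hi → μ (endpointBox lo hi) = ν (endpointBox lo hi)) : μ = ν := by
  let Icos : Set (Set ℝ) := {S | ∃ l u, l < u ∧ Ico l u = S}
  let Iocs : Set (Set ℝ) := {S | ∃ l u, l < u ∧ Ioc l u = S}
  let rects : Set (Set (ℝ × ℝ)) := image2 (· ×ˢ ·) Icos Iocs
  have hIcos : IsCountablySpanning Icos :=
    isCountablySpanning_of_Ioo_subset fun _ _ ↦ Ioo_subset_Ico_self
  have hIocs : IsCountablySpanning Iocs :=
    isCountablySpanning_of_Ioo_subset fun _ _ ↦ Ioo_subset_Ioc_self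
  have hrects_pi : IsPiSystem rects := (isPiSystem_Ico id id).prod (isPiSystem_Ioc id id)
  have hrects_gen : MeasurableSpace.generateFrom rects = Prod.instMeasurableSpace :=
    generateFrom_eq_prod ((borel_eq_generateFrom_Ico ℝ).symm.trans BorelSpace.measurable_eq.symm)
      ((borel_eq_generateFrom_Ioc ℝ).symm.trans BorelSpace.measurable_eq.symm) hIcos hIocs
  have hrects_span : IsCountablySpanning rects := hIcos.prod hIocs
  have hbox : ∀ S ∈ univ.pi '' univ.pi fun _ : ι ↦ rects,
      ∃ lo hi, lo ≤ hi ∧ endpointBox lo hi = S := by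
    rintro _ ⟨s, hs, rfl⟩
    have hrect (j : ι) : ∃ a b, a ≤ b ∧ endpointRect a b = s j := by
      obtain ⟨_, ⟨l, u, hlu, rfl⟩, _, ⟨l', u', hlu', rfl⟩, hj⟩ := hs j (mem_univ j)
      exact ⟨(l, l'), (u, u'), ⟨hlu.le, hlu'.le⟩, hj⟩
    choose lo hi hle heq using hrect
    exact ⟨lo, hi, hle, by simp only [endpointBox, heq]⟩
  obtain ⟨S, hS, hS_univ⟩ := IsCountablySpanning.pi fun _ : ι ↦ hrects_span
  refine Measure.ext_of_generateFrom_of_iUnion _ S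
    (generateFrom_eq_pi (fun _ ↦ hrects_gen) fun _ ↦ hrects_span).symm
    (IsPiSystem.pi fun _ ↦ hrects_pi) hS_univ hS (fun n ↦ ?_) fun T hT ↦ ?_
  · obtain ⟨lo, hi, -, heq⟩ := hbox _ (hS n)
    exact heq ▸ hfin lo hi
  · obtain ⟨lo, hi, hle, rfl⟩ := hbox T hT
    exact h lo hi hle

lemma eq_withDensity_ofReal_of_add_eq {α : Type*} [MeasurableSpace α] {μ ν : Measure α}
    {f : α → ℝ} (hf : Measurable f)
    (h : μ + ν.withDensity (fun x ↦ ENNReal.ofReal (-f x)) =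
      ν.withDensity fun x ↦ ENNReal.ofReal (f x)) :
    μ = ν.withDensity fun x ↦ ENNReal.ofReal (f x) := by
  have hneg : MeasurableSet {x | f x < 0} := measurableSet_lt hf measurable_const
  have hpos_part : ν.withDensity (fun x ↦ ENNReal.ofReal (f x)) {x | f x < 0} = 0 := by
    rw [withDensity_apply _ hneg, setLIntegral_eq_zero hneg]
    exact fun x hx ↦ ENNReal.ofReal_of_nonpos (le_of_lt hx)
  have hneg_part : ν.withDensity (fun x ↦ ENNReal.ofReal (-f x)) = 0 := by
    have hon_neg : ν.withDensity (fun x ↦ ENNReal.ofReal (-f x)) {x | f x < 0} = 0 := by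
      rw [← h, Measure.add_apply] at hpos_part
      exact (add_eq_zero.1 hpos_part).2
    have hoff_neg : ν.withDensity (fun x ↦ ENNReal.ofReal (-f x)) {x | f x < 0}ᶜ = 0 := by
      rw [withDensity_apply _ hneg.compl, setLIntegral_eq_zero hneg.compl]
      exact fun x hx ↦ ENNReal.ofReal_of_nonpos (neg_nonpos.2 (not_lt.1 hx))
    rw [← Measure.measure_univ_eq_zero, ← union_compl_self {x | f x < 0}]
    exact measure_union_null hon_neg hoff_neg
  rwa [hneg_part, add_zero] at h

theorem eq_withDensity_of_measureReal_endpointBox [Fintype ι] {P : Measure (ι → ℝ × ℝ)}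
    [IsLocallyFiniteMeasure P] {f : (ι → ℝ × ℝ) → ℝ} (hf : Measurable f)
    (hf_int : LocallyIntegrable f)
    (h : ∀ lo hi, lo ≤ hi → P.real (endpointBox lo hi) = ∫ x in endpointBox lo hi, f x) :
    P = volume.withDensity fun x ↦ ENNReal.ofReal (f x) := by
  have hint (lo hi) : IntegrableOn f (endpointBox lo hi) := integrableOn_endpointBox hf_int lo hi
  refine eq_withDensity_ofReal_of_add_eq hf
    (ext_of_endpointBox (fun lo hi ↦ ?_) fun lo hi hle ↦ ?_).symm
  · rw [withDensity_apply _ (measurableSet_endpointBox lo hi)]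
    exact (hint lo hi).lintegral_lt_top.ne
  · have hP_fin : P (endpointBox lo hi) ≠ ⊤ :=
      measure_ne_top_of_subset (endpointBox_subset_Icc lo hi) isCompact_Icc.measure_ne_top
    have hpos := (hint lo hi).lintegral_lt_top.ne
    have hneg : ∫⁻ x in endpointBox lo hi, ENNReal.ofReal (-f x) ≠ ⊤ :=
      (hint lo hi).neg.lintegral_lt_top.ne
    have hbox := h lo hi hle
    rw [integral_eq_lintegral_pos_part_sub_lintegral_neg_part (hint lo hi)] at hbox
    rw [Measure.add_apply, withDensity_apply _ (measurableSet_endpointBox lo hi),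
      withDensity_apply _ (measurableSet_endpointBox lo hi),
      ← ENNReal.toReal_eq_toReal_iff' hpos (ENNReal.add_ne_top.2 ⟨hP_fin, hneg⟩),
      ENNReal.toReal_add hP_fin hneg]
    exact sub_eq_iff_eq_add.1 hbox.symm

theorem eq_withDensity_mixedContainmentDeriv (P : Measure (Fin p → ℝ × ℝ)) [IsFiniteMeasure P]
    (hP : ContDiff ℝ (2 * p) (containmentCDF P)) :
    P = volume.withDensity fun x ↦
      ENNReal.ofReal ((-1) ^ p * mixedContainmentDeriv p (containmentCDF P) x) := by
  have hcont : Continuous fun x ↦ (-1) ^ p * mixedContainmentDeriv p (containmentCDF P) x :=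
    continuous_const.mul (continuous_mixedContainmentDeriv hP)
  exact eq_withDensity_of_measureReal_endpointBox hcont.measurable hcont.locallyIntegrable
    fun _ _ hle ↦ by rw [integral_const_mul, measureReal_endpointBox_eq_mul_setIntegral P hP hle]

lemma measurableSet_forall_fst_le_snd [Countable ι] :
    MeasurableSet {y : ι → ℝ × ℝ | ∀ j, (y j).1 ≤ (y j).2} := by
  rw [ofPred_forall]
  exact MeasurableSet.iInter fun j ↦ measurableSet_le (by fun_prop) (by fun_prop)

lemma containmentCDF_restrict [Countable ι] (P : Measure (ι → ℝ × ℝ)) (x : ι → ℝ × ℝ) :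
    containmentCDF (P.restrict {y | ∀ j, (y j).1 ≤ (y j).2}) x =
      P.real {y | ∀ j, (x j).1 ≤ (y j).1 ∧ (y j).1 ≤ (y j).2 ∧ (y j).2 ≤ (x j).2} := by
  rw [containmentCDF, measureReal_restrict_apply
    (MeasurableSet.univ_pi fun j ↦ measurableSet_containmentOrthant (x j))]
  congr 1
  ext y
  simp only [containmentOrthant, mem_inter_iff, mem_univ_pi, mem_prod, mem_Ici, mem_Iic,
    mem_ofPred_eq, ← forall_and]
  exact forall_congr' fun j ↦ by tauto

end

theorem containment_cdf_density_hypercube_general (p : ℕ) (P : Measure (Fin p → ℝ × ℝ))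
    [IsFiniteMeasure P] (F : (Fin p → ℝ × ℝ) → ℝ)
    (hF : ∀ x : Fin p → ℝ × ℝ,
      F x = (P {y : Fin p → ℝ × ℝ |
        ∀ j, (x j).1 ≤ (y j).1 ∧ (y j).1 ≤ (y j).2 ∧ (y j).2 ≤ (x j).2}).toReal)
    (hsmooth : ContDiff ℝ (2 * p) F) :
    P.restrict {y | ∀ j, (y j).1 ≤ (y j).2} =
      volume.withDensity fun x ↦ ENNReal.ofReal ((-1) ^ p * mixedContainmentDeriv p F x) := by
  obtain rfl : F = containmentCDF (P.restrict {y | ∀ j, (y j).1 ≤ (y j).2}) :=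
    funext fun x ↦ (hF x).trans (containmentCDF_restrict P x).symm
  exact eq_withDensity_mixedContainmentDeriv _ hsmooth

/-- **Theorem 8 of the paper.** Let `P` be a Borel probability measure on
`ℝ^{2p}` (coordinates grouped as endpoint pairs `(y̲_j, ȳ_j)`) giving full mass to
`{y : y̲_j ≤ ȳ_j ∀j}`, with containment distribution function
`F(x) = P({y : x̲_j ≤ y̲_j ≤ ȳ_j ≤ x̄_j ∀j})`. If `F` is `2p`-times continuously
differentiable, then `P` is absolutely continuous w.r.t. Lebesgue measure with density
`(−1)^p ∂^{2p}F/∂x̲₁∂x̄₁⋯∂x̲_p∂x̄_p`. -/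
theorem containment_cdf_density_hypercube (p : ℕ) (hp : 1 ≤ p)
    (P : Measure (Fin p → ℝ × ℝ)) [IsProbabilityMeasure P]
    (hsupp : P {y : Fin p → ℝ × ℝ | ∀ j, (y j).1 ≤ (y j).2} = 1)
    (F : (Fin p → ℝ × ℝ) → ℝ)
    (hF : ∀ x : Fin p → ℝ × ℝ,
      F x = (P {y : Fin p → ℝ × ℝ |
        ∀ j, (x j).1 ≤ (y j).1 ∧ (y j).1 ≤ (y j).2 ∧ (y j).2 ≤ (x j).2}).toReal)
    (hsmooth : ContDiff ℝ (2 * p) F) :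
    P ≪ volume ∧
      P = volume.withDensity fun x : Fin p → ℝ × ℝ =>
        ENNReal.ofReal ((-1 : ℝ) ^ p * mixedContainmentDeriv p F x) := by
  have hrestrict : P.restrict {y | ∀ j, (y j).1 ≤ (y j).2} = P :=
    Measure.restrict_eq_self_of_ae_mem
      ((mem_ae_iff_prob_eq_one measurableSet_forall_fst_le_snd).2 hsupp)
  have hdensity := containment_cdf_density_hypercube_general p P F hF hsmooth
  rw [hrestrict] at hdensity
  exact ⟨hdensity ▸ withDensity_absolutelyContinuous _ _, hdensity⟩
end
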